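/- arXiv:2011.10341 — 4 statements merged into one kernel-verified Lean document; each statement's English description precedes it below -/
import Mathlib

section
/- (Theorem 1, recovery-to-efficiency center.) Let E be a real vector space, X ⊆ E a nonempty set of feasible solutions, and d : E → E → ℝ a recovery-cost function such that for every fixed x ∈ X the function y ↦ d(x, y) is quasiconvex on all of E. Let F = {y₁, …, y_m} be a nonempty finite subset of E and let O ⊆ E satisfy F ⊆ O ⊆ convexHull ℝ F. If x* ∈ X minimizes the finite worst-case recovery cost, i.e., max_{i=1,…,m} d(x*, yᵢ) ≤ max_{i=1,…,m} d(x', yᵢ) for all x' ∈ X, then x* also minimizes the worst-case recovery cost over all of O, i.e., sSup ((fun y => d(x*, y)) '' O) ≤ sSup ((fun y => d(x', y)) '' O) for all x' ∈ X. -/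
/-- Theorem 1 (recovery-to-efficiency center): a minimizer of the finite worst-case
recovery cost over F also minimizes the worst-case recovery cost over the whole set O,
when F ⊆ O ⊆ convexHull ℝ F and d(x, ·) is quasiconvex for each x ∈ X. -/
theorem recEff_center_of_finite_center
    {E : Type*} [AddCommGroup E] [Module ℝ E]
    (X : Set E) (hX : X.Nonempty)
    (d : E → E → ℝ)
    (hd : ∀ x ∈ X, QuasiconvexOn ℝ (Set.univ : Set E) (fun y => d x y))
    (F : Finset E) (hF : F.Nonempty) (O : Set E)
    (hFO : (F : Set E) ⊆ O) (hOF : O ⊆ convexHull ℝ (F : Set E))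
    (xstar : E) (hxstar : xstar ∈ X)
    (hmin : ∀ x' ∈ X, F.sup' hF (fun y => d xstar y) ≤ F.sup' hF (fun y => d x' y)) :
    ∀ x' ∈ X, sSup ((fun y => d xstar y) '' O) ≤ sSup ((fun y => d x' y) '' O) := by
  have key : ∀ x ∈ X, IsLUB ((fun y => d x y) '' O) (F.sup' hF (fun y => d x y)) := by
    intro x hx
    constructor
    · rintro _ ⟨y, hy, rfl⟩
      have hsub : convexHull ℝ (F : Set E) ⊆
          {y | y ∈ (Set.univ : Set E) ∧ d x y ≤ F.sup' hF (fun y => d x y)} :=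
        convexHull_min
          (fun z hz => ⟨Set.mem_univ z, Finset.le_sup' (fun y => d x y) (Finset.mem_coe.1 hz)⟩)
          (hd x hx _)
      exact (hsub (hOF hy)).2
    · intro b hb
      exact Finset.sup'_le hF _ (fun y hy => hb ⟨y, hFO (Finset.mem_coe.2 hy), rfl⟩)
  have hne : O.Nonempty := hF.imp (fun y hy => hFO (Finset.mem_coe.2 hy))
  intro x' hx'
  rw [(key xstar hxstar).csSup_eq (hne.image _), (key x' hx').csSup_eq (hne.image _)]
  exact hmin x' hx'
end

section
/- Let E be a real vector space, X ⊆ E a nonempty set, and d : E → E → ℝ such that for every fixed x ∈ X the function y ↦ d(x, y) is quasiconvex on all of E. Let F be a nonempty finite subset of E and let O ⊆ E satisfy F ⊆ O ⊆ convexHull ℝ F. Then the optimal value of the center problem over O equals the optimal value of the center problem over F: ⨅_{x ∈ X} sSup ((fun y => d(x, y)) '' O) = ⨅_{x ∈ X} max_{z ∈ F} d(x, z), where the infima are taken as infima in ℝ over x ∈ X. -/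
/-- The optimal value of the center problem over O equals that over the finite set F,
when F ⊆ O ⊆ convexHull ℝ F and d(x, ·) is quasiconvex for each x ∈ X. -/
theorem recEff_center_value_eq
    {E : Type*} [AddCommGroup E] [Module ℝ E]
    (X : Set E) (hX : X.Nonempty)
    (d : E → E → ℝ)
    (hd : ∀ x ∈ X, QuasiconvexOn ℝ (Set.univ : Set E) (fun y => d x y))
    (F : Finset E) (hF : F.Nonempty) (O : Set E)
    (hFO : (F : Set E) ⊆ O) (hOF : O ⊆ convexHull ℝ (F : Set E)) :
    sInf ((fun x => sSup ((fun y => d x y) '' O)) '' X)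
      = sInf ((fun x => F.sup' hF (fun z => d x z)) '' X) := by
  congr 1
  apply Set.image_congr
  intro x hx
  have hub : ∀ y ∈ O, d x y ≤ F.sup' hF (fun z => d x z) := by
    intro y hy
    have hsub : (F : Set E) ⊆ {y ∈ (Set.univ : Set E) | d x y ≤ F.sup' hF (fun z => d x z)} :=
      fun z hz => ⟨Set.mem_univ z, Finset.le_sup' (fun z => d x z) (Finset.mem_coe.1 hz)⟩
    exact (convexHull_min hsub (hd x hx _) (hOF hy)).2
  apply IsLUB.csSup_eq
  · constructor
    · rintro _ ⟨y, hy, rfl⟩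
      exact hub y hy
    · intro b hb
      exact Finset.sup'_le hF _ fun z hz => hb ⟨z, hFO (Finset.mem_coe.2 hz), rfl⟩
  · obtain ⟨z, hz⟩ := hF
    exact ⟨_, z, hFO (Finset.mem_coe.2 hz), rfl⟩
end

section
/- (Theorem 2, polytope uncertainty set with affine solution map.) Let V and E be real vector spaces, let ξ¹, …, ξ^m be finitely many points of V (m ≥ 1), and let U = convexHull ℝ {ξ¹, …, ξ^m} be the bounded polyhedral uncertainty set. Let T : V →ᵃ[ℝ] E be an affine map assigning to each scenario ξ ∈ U the (unique) optimal solution T(ξ) of the scalarized problem for that scenario. Let X ⊆ E be a nonempty feasible set and d : E → E → ℝ be such that for every fixed x ∈ X the function y ↦ d(x, y) is quasiconvex on all of E. If x* ∈ X minimizes max_{i=1,…,m} d(x*, T(ξⁱ)) over x ∈ X, then x* also minimizes the worst-case recovery cost over the whole polytope, i.e., sSup ((fun ξ => d(x*, T ξ)) '' U) ≤ sSup ((fun ξ => d(x', T ξ)) '' U) for every x' ∈ X. -/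
/-- Theorem 2: polytope uncertainty set with an affine solution map. A minimizer of the
maximum recovery cost to the solutions of the finitely many generating scenarios also
minimizes the worst-case recovery cost over the whole polytope. -/
theorem recEff_center_polytope
    {V E : Type*} [AddCommGroup V] [Module ℝ V] [AddCommGroup E] [Module ℝ E]
    (m : ℕ) (hm : 0 < m) (ξ : Fin m → V)
    (T : V →ᵃ[ℝ] E)
    (X : Set E) (hX : X.Nonempty)
    (d : E → E → ℝ)
    (hd : ∀ x ∈ X, QuasiconvexOn ℝ (Set.univ : Set E) (fun y => d x y))
    (xstar : E) (hxstar : xstar ∈ X)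
    (hmin : ∀ x' ∈ X,
      (Finset.univ : Finset (Fin m)).sup' ⟨⟨0, hm⟩, Finset.mem_univ _⟩
          (fun i => d xstar (T (ξ i)))
        ≤ (Finset.univ : Finset (Fin m)).sup' ⟨⟨0, hm⟩, Finset.mem_univ _⟩
          (fun i => d x' (T (ξ i)))) :
    ∀ x' ∈ X,
      sSup ((fun ζ => d xstar (T ζ)) '' convexHull ℝ (Set.range ξ))
        ≤ sSup ((fun ζ => d x' (T ζ)) '' convexHull ℝ (Set.range ξ)) := by
  have key : ∀ x ∈ X, ∀ ζ ∈ convexHull ℝ (Set.range ξ), d x (T ζ) ≤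
      (Finset.univ : Finset (Fin m)).sup' ⟨⟨0, hm⟩, Finset.mem_univ _⟩
          (fun i => d x (T (ξ i))) := by
    intro x hx ζ hζ
    have hc := (hd x hx ((Finset.univ : Finset (Fin m)).sup' ⟨⟨0, hm⟩, Finset.mem_univ _⟩
          (fun i => d x (T (ξ i))))).affine_preimage T
    refine (convexHull_min ?_ hc hζ).2
    rintro _ ⟨i, rfl⟩
    exact ⟨Set.mem_univ _, Finset.le_sup' (fun i => d x (T (ξ i))) (Finset.mem_univ i)⟩
  intro x' hx'
  have hne : (convexHull ℝ (Set.range ξ)).Nonempty :=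
    ⟨ξ ⟨0, hm⟩, subset_convexHull ℝ _ ⟨_, rfl⟩⟩
  refine csSup_le (hne.image _) ?_
  rintro _ ⟨ζ, hζ, rfl⟩
  refine (key xstar hxstar ζ hζ).trans ((hmin x' hx').trans ?_)
  refine Finset.sup'_le _ _ fun i _ => ?_
  refine le_csSup ⟨(Finset.univ : Finset (Fin m)).sup' ⟨⟨0, hm⟩, Finset.mem_univ _⟩
    (fun i => d x' (T (ξ i))), ?_⟩ ⟨ξ i, subset_convexHull ℝ _ ⟨i, rfl⟩, rfl⟩
  rintro _ ⟨η, hη, rfl⟩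
  exact key x' hx' η hη
end

section
/- (Corollary: scenario reduction to the vertices of the polytope.) Let V and E be real vector spaces, let S = {ξ¹, …, ξ^m} be a nonempty finite subset of V, let U = convexHull ℝ S, and let T : V →ᵃ[ℝ] E be an affine map. Let d : E → E → ℝ be such that for every fixed x the function y ↦ d(x, y) is quasiconvex on all of E. Then for every x ∈ E, the worst-case recovery cost over U equals the worst-case recovery cost over the finitely many scenarios in S: sSup ((fun ξ => d(x, T ξ)) '' U) = max_{ξ ∈ S} d(x, T ξ). Consequently, the objective functions of the Rec-Eff center problem over U and over S coincide, so the finite scenario set S may be chosen in place of U without loss of generality. -/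
/-- Corollary: scenario reduction to the vertices of the polytope. The worst-case
recovery cost over the polytope U = convexHull ℝ S equals the maximum over the
finitely many generating scenarios in S. -/
theorem recEff_center_scenario_reduction
    {V E : Type*} [AddCommGroup V] [Module ℝ V] [AddCommGroup E] [Module ℝ E]
    (S : Finset V) (hS : S.Nonempty)
    (T : V →ᵃ[ℝ] E)
    (d : E → E → ℝ)
    (hd : ∀ x : E, QuasiconvexOn ℝ (Set.univ : Set E) (fun y => d x y)) :
    ∀ x : E,
      sSup ((fun ζ => d x (T ζ)) '' convexHull ℝ (S : Set V))
        = S.sup' hS (fun ζ => d x (T ζ)) := by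
  intro x
  have hsub : convexHull ℝ (S : Set V) ⊆
      T ⁻¹' {y | y ∈ (Set.univ : Set E) ∧ d x y ≤ S.sup' hS (fun ζ => d x (T ζ))} := by
    apply convexHull_min
    · intro ζ hζ
      exact ⟨Set.mem_univ _, Finset.le_sup' (fun ζ => d x (T ζ)) hζ⟩
    · exact (hd x _).affine_preimage T
  apply IsGreatest.csSup_eq
  constructor
  · obtain ⟨ζ, hζ, h⟩ := Finset.exists_mem_eq_sup' hS (fun ζ => d x (T ζ))
    exact ⟨ζ, subset_convexHull ℝ _ hζ, h.symm⟩
  · rintro _ ⟨ζ, hζ, rfl⟩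
    exact (hsub hζ).2
end
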